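/- Let E be the Euclidean space ℝⁿ, let F, G : E → ℝ be convex functions with F ≥ 0 everywhere, let S ⊆ E be a set, and let (h_k)_{k∈ℕ} be a sequence in S such that G(h_k) > 0 for all k. Suppose for every k there is a subgradient s_k of G at h_k such that h_{k+1} minimises Φ_k(h) = F(h) − (F(h_k)/G(h_k))·⟨h − h_k, s_k⟩ + ‖h − h_k‖² over S. Then the sequence of quotient values μ_k = F(h_k)/G(h_k) is non-increasing: μ_{k+1} ≤ μ_k for all k ∈ ℕ. -/

import Mathlib

open scoped RealInnerProductSpace

section InversePowerMethod

variable {E : Type*} [SeminormedAddCommGroup E] [InnerProductSpace ℝ E]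
  {F G : E → ℝ} {S : Set E} {x y s : E} {μ : ℝ}

/-- `s` is a subgradient of `G` at `x`, represented as a vector through the inner product. -/
def IsSubgradientAt (G : E → ℝ) (s x : E) : Prop :=
  ∀ y, G x + ⟪s, y - x⟫ ≤ G y

/-- The objective `Φ` minimised in one step of the generalised inverse power method from `x`, where
`s` is a subgradient of `G` at `x` and `μ` is the quotient value `F x / G x`. -/
def inversePowerObjective (F : E → ℝ) (μ : ℝ) (s x y : E) : ℝ :=
  F y - μ * ⟪y - x, s⟫ + ‖y - x‖ ^ 2

theorem inversePowerObjective_self (F : E → ℝ) (μ : ℝ) (s x : E) :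
    inversePowerObjective F μ s x x = F x := by
  simp [inversePowerObjective]

theorem IsSubgradientAt.le_inversePowerObjective (hs : IsSubgradientAt G s x) (hμ : 0 ≤ μ)
    (F : E → ℝ) (y : E) :
    F y - μ * (G y - G x) + ‖y - x‖ ^ 2 ≤ inversePowerObjective F μ s x y := by
  have hinner : ⟪y - x, s⟫ ≤ G y - G x := by
    rw [real_inner_comm]
    exact le_sub_iff_add_le'.2 (hs y)
  unfold inversePowerObjective
  gcongr

theorem IsSubgradientAt.add_sq_norm_le_of_isMinOn (hs : IsSubgradientAt G s x) (hx : x ∈ S)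
    (hF : 0 ≤ F x) (hG : 0 < G x)
    (hmin : IsMinOn (inversePowerObjective F (F x / G x) s x) S y) :
    F y + ‖y - x‖ ^ 2 ≤ F x / G x * G y := by
  have hdecrease : F y - F x / G x * (G y - G x) + ‖y - x‖ ^ 2 ≤ F x :=
    calc
      _ ≤ inversePowerObjective F (F x / G x) s x y :=
        hs.le_inversePowerObjective (div_nonneg hF hG.le) F y
      _ ≤ inversePowerObjective F (F x / G x) s x x := isMinOn_iff.1 hmin x hx
      _ = F x := inversePowerObjective_self F _ s x
  have hquotient : F x / G x * G x = F x := div_mul_cancel₀ _ hG.ne'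
  linarith

theorem IsSubgradientAt.div_le_div_of_isMinOn (hs : IsSubgradientAt G s x) (hx : x ∈ S)
    (hF : 0 ≤ F x) (hGx : 0 < G x) (hGy : 0 < G y)
    (hmin : IsMinOn (inversePowerObjective F (F x / G x) s x) S y) :
    F y / G y ≤ F x / G x :=
  (div_le_iff₀ hGy).2 <|
    (le_add_of_nonneg_right (sq_nonneg _)).trans (hs.add_sq_norm_le_of_isMinOn hx hF hGx hmin)

theorem quotient_nonincreasing_general {h : ℕ → E} (hS : ∀ k, h k ∈ S)
    (hF : ∀ k, 0 ≤ F (h k)) (hG : ∀ k, 0 < G (h k))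
    (hstep : ∀ k, ∃ s, IsSubgradientAt G s (h k) ∧
      IsMinOn (inversePowerObjective F (F (h k) / G (h k)) s (h k)) S (h (k + 1))) :
    Antitone fun k ↦ F (h k) / G (h k) := by
  refine antitone_nat_of_succ_le fun k ↦ ?_
  obtain ⟨s, hs, hmin⟩ := hstep k
  exact hs.div_le_div_of_isMinOn (hS k) (hF k) (hG k) (hG (k + 1)) hmin

end InversePowerMethod

/-- The quotient values of the generalised inverse power method are non-increasing. -/
theorem quotient_nonincreasing
    {n : ℕ}
    (F G : EuclideanSpace ℝ (Fin n) → ℝ)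
    (hF : ConvexOn ℝ Set.univ F) (hG : ConvexOn ℝ Set.univ G)
    (hFnonneg : ∀ h, 0 ≤ F h)
    (S : Set (EuclideanSpace ℝ (Fin n)))
    (h : ℕ → EuclideanSpace ℝ (Fin n)) (hhS : ∀ k, h k ∈ S)
    (hGpos : ∀ k, 0 < G (h k))
    (hstep : ∀ k : ℕ, ∃ s : EuclideanSpace ℝ (Fin n),
      (∀ x, G x ≥ G (h k) + ⟪s, x - h k⟫) ∧
      (∀ x ∈ S,
        F (h (k+1)) - (F (h k) / G (h k)) * ⟪h (k+1) - h k, s⟫ + ‖h (k+1) - h k‖ ^ 2 ≤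
          F x - (F (h k) / G (h k)) * ⟪x - h k, s⟫ + ‖x - h k‖ ^ 2)) :
    ∀ k : ℕ, F (h (k+1)) / G (h (k+1)) ≤ F (h k) / G (h k) := by
  intro k
  exact quotient_nonincreasing_general hhS (fun k ↦ hFnonneg (h k)) hGpos hstep k.le_succ
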